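/- Let C be an (n,k) linear code over a finite field F_q with the following property: for every cubic tree T with n leaves there exists an internal node v of T such that U_{n_1}(C) + U_{n_2}(C) + U_{n_3}(C) ≤ k − τ(C), where n_i = n_{e_i(v),v} for i = 1,2,3. Then the treewidth of C equals its trelliswidth: κ(C) = τ(C). -/

import Mathlib

open Module

/-- The submodule of vectors supported on `J` (i.e. zero outside `J`). -/
def supportedOn (F : Type) [Field F] {n : ℕ} (J : Set (Fin n)) : Submodule F (Fin n → F) :=
  Submodule.pi Jᶜ fun _ => ⊥

/-- Dimension of the shortening `C_J` of the code `C` to the coordinates in `J`. -/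
noncomputable def shortDim {F : Type} [Field F] {n : ℕ}
    (C : Submodule F (Fin n → F)) (J : Set (Fin n)) : ℕ :=
  finrank F ↥(C ⊓ supportedOn F J)

/-- Support of a subcode. -/
def chi {F : Type} [Field F] {n : ℕ} (D : Submodule F (Fin n → F)) : Set (Fin n) :=
  {i | ∃ c ∈ D, c i ≠ 0}

/-- `Ucap C s`: maximal dimension of a subcode of `C` whose support has size at most `s`. -/
noncomputable def Ucap {F : Type} [Field F] {n : ℕ}
    (C : Submodule F (Fin n → F)) (s : ℕ) : ℕ :=
  sSup {d : ℕ | ∃ D : Submodule F (Fin n → F), D ≤ C ∧ (chi D).ncard ≤ s ∧ finrank F ↥D = d}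

/-- Trelliswidth: the least branch complexity of any trellis realization of `C`,
minimized over all orderings (bijections from positions to coordinates) of `C`. -/
noncomputable def trellisWidth {F : Type} [Field F] {n : ℕ}
    (C : Submodule F (Fin n → F)) : ℕ :=
  sInf {t : ℕ | ∃ π : Equiv.Perm (Fin n),
    t = Finset.univ.sup fun i : Fin n =>
      finrank F ↥C - shortDim C (⇑π '' {j | j < i}) - shortDim C (⇑π '' {j | i < j})}

/-- Degree of a vertex (the number of its neighbours). -/
noncomputable def deg {V : Type} (T : SimpleGraph V) (v : V) : ℕ :=
  (T.neighborSet v).ncard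

/-- The set of leaves (degree-1 vertices) of a graph. -/
def leaves {V : Type} (T : SimpleGraph V) : Set V :=
  {v | deg T v = 1}

/-- A cubic tree: every node is a leaf (degree 1) or internal of degree 3. -/
def IsCubic {V : Type} (T : SimpleGraph V) : Prop :=
  ∀ v, deg T v = 1 ∨ deg T v = 3

/-- `compAway T v u` : the vertex set of the component of `T` minus the edge `{v,u}`
containing `u` (hence not containing `v`); this is `T_{e,v}` for `e = {u,v}`. -/
def compAway {V : Type} (T : SimpleGraph V) (v u : V) : Set V :=
  {w | (T.deleteEdges {s(v, u)}).Reachable u w}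

/-- `nAway T v u` : the number of leaves of `T` lying in the component of `T - {v,u}`
not containing `v`; this is `n_{e,v}` for `e = {u,v}`. -/
noncomputable def nAway {V : Type} (T : SimpleGraph V) (v u : V) : ℕ :=
  (compAway T v u ∩ leaves T).ncard

/-- Neighbours of a vertex, as a `Finset`. -/
noncomputable def nbrFinset {V : Type} [Fintype V] (T : SimpleGraph V) (v : V) : Finset V :=
  (T.neighborSet v).toFinite.toFinset

/-- `κ_v`: local constraint-code dimension at node `v` of the minimal realization of `C`
on the tree decomposition `(T, ω)`. -/
noncomputable def kappaNode {F : Type} [Field F] {n : ℕ} (C : Submodule F (Fin n → F))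
    {V : Type} [Fintype V] (T : SimpleGraph V) (ω : Fin n → V) (v : V) : ℕ :=
  finrank F ↥C - ∑ u ∈ nbrFinset T v, shortDim C (ω ⁻¹' compAway T v u)

/-- Constraint complexity `κ(C; T, ω)` of the minimal realization of `C` on `(T, ω)`. -/
noncomputable def constraintComplexity {F : Type} [Field F] {n : ℕ}
    (C : Submodule F (Fin n → F)) {V : Type} [Fintype V]
    (T : SimpleGraph V) (ω : Fin n → V) : ℕ :=
  Finset.univ.sup (kappaNode C T ω)

/-- Treewidth of a code: the least constraint complexity of any of its tree
decompositions `(T, ω)` with `T` a finite tree. -/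
noncomputable def treeWidth {F : Type} [Field F] {n : ℕ}
    (C : Submodule F (Fin n → F)) : ℕ :=
  sInf {t : ℕ | ∃ (N : ℕ) (T : SimpleGraph (Fin N)) (ω : Fin n → Fin N),
    T.IsTree ∧ t = constraintComplexity C T ω}


/-! ### Closure under adjacency -/

lemma closed_of_reachable {V : Type} {G : SimpleGraph V} {s : Set V}
    (hs : ∀ a b, a ∈ s → G.Adj a b → b ∈ s) {a b : V} (ha : a ∈ s) (h : G.Reachable a b) :
    b ∈ s := by
  obtain ⟨p⟩ := h
  induction p with
  | nil => exact ha
  | cons hadj p ih => exact ih (hs _ _ ha hadj)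

lemma self_mem_compAway {V : Type} (T : SimpleGraph V) (v u : V) : u ∈ compAway T v u :=
  SimpleGraph.Reachable.refl u

lemma compAway_step {V : Type} {T : SimpleGraph V} {v u a b : V} (ha : a ∈ compAway T v u)
    (hab : T.Adj a b) (hne : s(a, b) ≠ s(v, u)) : b ∈ compAway T v u := by
  have : (T.deleteEdges {s(v, u)}).Adj a b := by
    rw [SimpleGraph.deleteEdges_adj]
    exact ⟨hab, by simpa using hne⟩
  exact SimpleGraph.Reachable.trans ha this.reachable

lemma compAway_subset {V : Type} {T : SimpleGraph V} {v u : V} {s : Set V} (hu : u ∈ s)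
    (hs : ∀ a b, a ∈ s → T.Adj a b → s(a, b) ≠ s(v, u) → b ∈ s) : compAway T v u ⊆ s := by
  intro w hw
  refine closed_of_reachable (G := T.deleteEdges {s(v, u)}) ?_ hu hw
  intro a b ha hab
  rw [SimpleGraph.deleteEdges_adj] at hab
  exact hs a b ha hab.1 (by simpa using hab.2)

lemma notMem_compAway {V : Type} {T : SimpleGraph V} (hT : T.IsTree) {v u : V}
    (h : T.Adj v u) : v ∉ compAway T v u := by
  intro hv
  have := SimpleGraph.isAcyclic_iff_forall_adj_isBridge.1 hT.isAcyclic h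
  rw [SimpleGraph.isBridge_iff] at this
  exact this (SimpleGraph.Reachable.symm hv)

lemma compAway_disj_symm {V : Type} {T : SimpleGraph V} (hT : T.IsTree) {v u w : V}
    (h : T.Adj v u) (h1 : w ∈ compAway T v u) (h2 : w ∈ compAway T u v) : False := by
  have := SimpleGraph.isAcyclic_iff_forall_adj_isBridge.1 hT.isAcyclic h
  rw [SimpleGraph.isBridge_iff] at this
  unfold compAway at h1 h2
  rw [Set.mem_ofPred_eq] at h1 h2
  rw [Sym2.eq_swap] at h2
  exact this (h2.trans h1.symm)

lemma compAway_cover {V : Type} {T : SimpleGraph V} (hT : T.Connected) (v u w : V) :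
    w ∈ compAway T v u ∨ w ∈ compAway T u v := by
  refine closed_of_reachable (G := T) (s := {w | w ∈ compAway T v u ∨ w ∈ compAway T u v}) ?_
    (Or.inl (self_mem_compAway T v u)) (hT.preconnected u w)
  rintro a b hab hadj
  by_cases he : s(a, b) = s(v, u)
  · rw [Sym2.eq_iff] at he
    rcases he with ⟨rfl, rfl⟩ | ⟨rfl, rfl⟩
    · exact Or.inl (self_mem_compAway _ _ _)
    · exact Or.inr (self_mem_compAway _ _ _)
  · rcases hab with hab | hab
    · exact Or.inl (compAway_step hab hadj he)
    · exact Or.inr (compAway_step hab hadj (by rwa [Sym2.eq_swap (a := u)]))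

lemma compAway_compl {V : Type} {T : SimpleGraph V} (hT : T.IsTree) {v u : V}
    (h : T.Adj v u) : compAway T u v = (compAway T v u)ᶜ := by
  ext w
  constructor
  · intro h1 h2
    exact compAway_disj_symm hT h h2 h1
  · intro h1
    exact (compAway_cover hT.connected v u w).resolve_left h1

lemma exists_compAway {V : Type} {T : SimpleGraph V} (hT : T.Connected) (v w : V) :
    w = v ∨ ∃ u, T.Adj v u ∧ w ∈ compAway T v u := by
  refine closed_of_reachable (G := T) (s := {w | w = v ∨ ∃ u, T.Adj v u ∧ w ∈ compAway T v u}) ?_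
    (Or.inl rfl) (hT.preconnected v w)
  rintro a b (rfl | ⟨u, hu, ha⟩) hadj
  · exact Or.inr ⟨b, hadj, self_mem_compAway _ _ _⟩
  · by_cases he : s(a, b) = s(v, u)
    · rw [Sym2.eq_iff] at he
      rcases he with ⟨rfl, rfl⟩ | ⟨rfl, rfl⟩
      · exact Or.inr ⟨_, hu, self_mem_compAway _ _ _⟩
      · exact Or.inl rfl
    · exact Or.inr ⟨u, hu, compAway_step ha hadj he⟩

lemma compAway_disj {V : Type} {T : SimpleGraph V} (hT : T.IsTree) {v u₁ u₂ w : V}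
    (h₁ : T.Adj v u₁) (h₂ : T.Adj v u₂) (hne : u₁ ≠ u₂)
    (hw₁ : w ∈ compAway T v u₁) (hw₂ : w ∈ compAway T v u₂) : False := by
  have hsub : compAway T v u₂ ⊆ compAway T u₁ v ∩ compAway T v u₂ := by
    refine compAway_subset ⟨?_, self_mem_compAway _ _ _⟩ ?_
    · refine compAway_step (self_mem_compAway T u₁ v) h₂ ?_
      intro he
      rw [Sym2.eq_iff] at he
      rcases he with ⟨h, _⟩ | ⟨_, h⟩
      · exact h₁.ne h
      · exact hne h.symm
    · rintro a b ⟨ha, ha'⟩ hab hne'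
      have hb' := compAway_step ha' hab hne'
      refine ⟨compAway_step ha hab ?_, hb'⟩
      intro he
      rw [Sym2.eq_iff] at he
      rcases he with ⟨_, rfl⟩ | ⟨rfl, _⟩
      · exact notMem_compAway hT h₂ hb'
      · exact notMem_compAway hT h₂ ha'
  exact compAway_disj_symm hT h₁ hw₁ (hsub hw₂).1

/-! ### Tree orders -/

section TreeOrder

variable {V : Type} [PartialOrder V] [Finite V]

lemma le_of_lt_covBy (hch : ∀ a b c : V, a ≤ b → a ≤ c → b ≤ c ∨ c ≤ b) {a b c : V}
    (h : a < c) (hab : a ⋖ b) : b ≤ c := by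
  rcases hch a b c hab.le h.le with h' | h'
  · exact h'
  · rcases h'.eq_or_lt with rfl | h''
    · exact le_rfl
    · exact absurd h'' (hab.2 h)

lemma covBy_unique (hch : ∀ a b c : V, a ≤ b → a ≤ c → b ≤ c ∨ c ≤ b) {a b c : V}
    (hab : a ⋖ b) (hac : a ⋖ c) : b = c :=
  le_antisymm (le_of_lt_covBy hch hac.lt hab) (le_of_lt_covBy hch hab.lt hac)

lemma hasse_compAway_subset (hch : ∀ a b c : V, a ≤ b → a ≤ c → b ≤ c ∨ c ≤ b) {a b : V}
    (hab : a ⋖ b) : compAway (SimpleGraph.hasse V) b a ⊆ Set.Iic a := by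
  refine compAway_subset (Set.mem_Iic.2 le_rfl) ?_
  intro c d hc hcd hne
  rw [SimpleGraph.hasse_adj] at hcd
  rw [Set.mem_Iic] at hc ⊢
  rcases hcd with hcd | hdc
  · rcases hc.eq_or_lt with rfl | hlt
    · exact absurd (by rw [covBy_unique hch hcd hab, Sym2.eq_swap]) hne
    · exact le_of_lt_covBy hch hlt hcd
  · exact hdc.le.trans hc

lemma hasse_connected [OrderTop V] : (SimpleGraph.hasse V).Connected := by
  have key : ∀ a : V, (SimpleGraph.hasse V).Reachable a ⊤ := by
    intro a
    induction a using WellFoundedGT.induction with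
    | ind a ih =>
      rcases eq_or_ne a ⊤ with rfl | hne
      · exact SimpleGraph.Reachable.refl _
      · obtain ⟨b, hab, -⟩ := exists_covBy_le_of_lt (lt_top_iff_ne_top.2 hne)
        have : (SimpleGraph.hasse V).Adj a b := SimpleGraph.hasse_adj.2 (Or.inl hab)
        exact this.reachable.trans (ih b hab.lt)
  exact (SimpleGraph.connected_iff _).2 ⟨fun a b => (key a).trans (key b).symm, ⟨⊤⟩⟩

lemma hasse_isTree [OrderTop V] (hch : ∀ a b c : V, a ≤ b → a ≤ c → b ≤ c ∨ c ≤ b) :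
    (SimpleGraph.hasse V).IsTree := by
  refine ⟨hasse_connected, ?_⟩
  rw [SimpleGraph.isAcyclic_iff_forall_adj_isBridge]
  have key : ∀ a b : V, a ⋖ b → (SimpleGraph.hasse V).IsBridge s(a, b) := by
    intro a b hab
    rw [SimpleGraph.isBridge_iff]
    intro h
    rw [Sym2.eq_swap] at h
    have : b ∈ compAway (SimpleGraph.hasse V) b a := h
    exact absurd (hasse_compAway_subset hch hab this) (not_le_of_gt hab.lt)
  intro a b hab
  rcases SimpleGraph.hasse_adj.1 hab with h | h
  · exact key a b h
  · rw [Sym2.eq_swap]; exact key b a h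

lemma hasse_compAway_down (hch : ∀ a b c : V, a ≤ b → a ≤ c → b ≤ c ∨ c ≤ b)
    {a b : V} (hab : a ⋖ b) : compAway (SimpleGraph.hasse V) b a = Set.Iic a := by
  refine Set.Subset.antisymm (hasse_compAway_subset hch hab) ?_
  intro c
  induction c using WellFoundedGT.induction with
  | ind c ih =>
    intro hc
    rw [Set.mem_Iic] at hc
    rcases hc.eq_or_lt with rfl | hlt
    · exact self_mem_compAway _ _ _
    · obtain ⟨d, hcd, hda⟩ := exists_covBy_le_of_lt hlt
      refine compAway_step (ih d hcd.lt hda) (SimpleGraph.hasse_adj.2 (Or.inr hcd)) ?_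
      intro he
      rw [Sym2.eq_iff] at he
      rcases he with ⟨rfl, _⟩ | ⟨_, rfl⟩
      · exact absurd hda (not_le_of_gt hab.lt)
      · exact absurd hc (not_le_of_gt hab.lt)

lemma hasse_compAway_up [OrderTop V] (hch : ∀ a b c : V, a ≤ b → a ≤ c → b ≤ c ∨ c ≤ b)
    {a b : V} (hab : a ⋖ b) : compAway (SimpleGraph.hasse V) a b = (Set.Iic a)ᶜ := by
  rw [compAway_compl (hasse_isTree hch) (SimpleGraph.hasse_adj.2 (Or.inr hab)),
    hasse_compAway_down hch hab]

end TreeOrder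

/-! ### Linear algebra -/

section LinAlg

variable {F : Type} [Field F] {n : ℕ} (C : Submodule F (Fin n → F))

lemma mem_supportedOn {J : Set (Fin n)} {c : Fin n → F} :
    c ∈ supportedOn F J ↔ ∀ i, i ∉ J → c i = 0 := by
  simp [supportedOn, Submodule.mem_pi]

lemma shortDim_mono {A B : Set (Fin n)} (h : A ⊆ B) : shortDim C A ≤ shortDim C B := by
  apply Submodule.finrank_mono
  refine inf_le_inf_left _ ?_
  intro c hc
  rw [mem_supportedOn] at hc ⊢
  exact fun i hi => hc i (fun h' => hi (h h'))

lemma shortDim_empty : shortDim C ∅ = 0 := by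
  have : C ⊓ supportedOn F (∅ : Set (Fin n)) = ⊥ := by
    rw [eq_bot_iff]
    rintro c ⟨_, hc⟩
    rw [SetLike.mem_coe, mem_supportedOn] at hc
    rw [Submodule.mem_bot]
    ext i
    exact hc i (by simp)
  rw [shortDim, this, finrank_bot]

lemma shortDim_union {A B : Set (Fin n)} (h : Disjoint A B) :
    shortDim C A + shortDim C B ≤ shortDim C (A ∪ B) := by
  have h1 := Submodule.finrank_sup_add_finrank_inf_eq (C ⊓ supportedOn F A) (C ⊓ supportedOn F B)
  have h2 : (C ⊓ supportedOn F A) ⊓ (C ⊓ supportedOn F B) = ⊥ := by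
    rw [eq_bot_iff]
    rintro c ⟨⟨_, hc⟩, ⟨_, hc'⟩⟩
    rw [SetLike.mem_coe, mem_supportedOn] at hc hc'
    rw [Submodule.mem_bot]
    ext i
    by_cases hi : i ∈ A
    · exact hc' i (Set.disjoint_left.1 h hi)
    · exact hc i hi
  have h3 : (C ⊓ supportedOn F A) ⊔ (C ⊓ supportedOn F B) ≤ C ⊓ supportedOn F (A ∪ B) := by
    refine sup_le (inf_le_inf_left _ ?_) (inf_le_inf_left _ ?_) <;>
    · intro c hc
      rw [mem_supportedOn] at hc ⊢
      intro i hi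
      rw [Set.mem_union, not_or] at hi
      first
        | exact hc i hi.1
        | exact hc i hi.2
  have h4 := Submodule.finrank_mono h3
  rw [h2, finrank_bot, add_zero] at h1
  unfold shortDim
  omega

lemma sum_shortDim_le {ι : Type} (s : Finset ι) (B : ι → Set (Fin n)) (A : Set (Fin n))
    (hd : ∀ i ∈ s, ∀ j ∈ s, i ≠ j → Disjoint (B i) (B j)) (hA : ∀ i ∈ s, B i ⊆ A) :
    ∑ i ∈ s, shortDim C (B i) ≤ shortDim C A := by
  classical
  have key : ∑ i ∈ s, shortDim C (B i) ≤ shortDim C (⋃ i ∈ s, B i) := by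
    clear hA
    induction s using Finset.induction_on with
    | empty => simp
    | insert a s ha ih =>
      rw [Finset.sum_insert ha, Finset.set_biUnion_insert]
      refine le_trans (Nat.add_le_add_left (ih ?_) _) (shortDim_union C ?_)
      · exact fun i hi j hj => hd i (Finset.mem_insert_of_mem hi) j (Finset.mem_insert_of_mem hj)
      · simp only [Set.disjoint_iUnion_right]
        intro i hi
        exact hd a (Finset.mem_insert_self _ _) i (Finset.mem_insert_of_mem hi)
          (fun h => ha (h ▸ hi))
  exact key.trans (shortDim_mono C (Set.iUnion₂_subset hA))

lemma sum_shortDim_le_three {ι : Type} (s : Finset ι) (B : ι → Set (Fin n))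
    (A₁ A₂ A₃ : Set (Fin n))
    (hd : ∀ i ∈ s, ∀ j ∈ s, i ≠ j → Disjoint (B i) (B j))
    (hA : ∀ i ∈ s, B i ⊆ A₁ ∨ B i ⊆ A₂ ∨ B i ⊆ A₃) :
    ∑ i ∈ s, shortDim C (B i) ≤ shortDim C A₁ + shortDim C A₂ + shortDim C A₃ := by
  classical
  have h : ∀ A : Set (Fin n), ∑ i ∈ s with B i ⊆ A, shortDim C (B i) ≤ shortDim C A := by
    intro A
    refine sum_shortDim_le C _ B A ?_ ?_
    · intro i hi j hj
      exact hd i (Finset.mem_filter.1 hi).1 j (Finset.mem_filter.1 hj).1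
    · intro i hi
      exact (Finset.mem_filter.1 hi).2
  refine le_trans ?_ (Nat.add_le_add (Nat.add_le_add (h A₁) (h A₂)) (h A₃))
  simp only [Finset.sum_filter, ← Finset.sum_add_distrib]
  refine Finset.sum_le_sum ?_
  intro i hi
  rcases hA i hi with h | h | h <;> simp only [h, if_true] <;> omega

lemma shortDim_le_Ucap {A : Set (Fin n)} {s : ℕ} (h : A.ncard ≤ s) :
    shortDim C A ≤ Ucap C s := by
  refine le_csSup ⟨finrank F C, ?_⟩ ⟨C ⊓ supportedOn F A, inf_le_left, ?_, rfl⟩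
  · rintro d ⟨D, hD, _, rfl⟩
    exact Submodule.finrank_mono hD
  · refine le_trans (Set.ncard_le_ncard ?_ (Set.toFinite _)) h
    rintro i ⟨c, ⟨_, hc⟩, hi⟩
    by_contra hiA
    exact hi (mem_supportedOn.1 hc i hiA)

lemma trellisWidth_le : trellisWidth C ≤ finrank F C := by
  refine le_trans (Nat.sInf_le ⟨1, rfl⟩) ?_
  refine Finset.sup_le ?_
  intro i _
  omega

end LinAlg

/-! ### Binary hierarchies -/

/-- Binary hierarchies of subsets whose joins satisfy `P`. -/
inductive Hier {I : Type} (P : Set I → Set I → Prop) : Set I → Set (Set I) → Prop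
  | single (i : I) : Hier P {i} {{i}}
  | join {S₁ S₂ : Set I} {H₁ H₂ : Set (Set I)} : Hier P S₁ H₁ → Hier P S₂ H₂ →
      Disjoint S₁ S₂ → P S₁ S₂ → Hier P (S₁ ∪ S₂) (insert (S₁ ∪ S₂) (H₁ ∪ H₂))

section HierLemmas

variable {I : Type} {P : Set I → Set I → Prop}

lemma Hier.top_mem {S : Set I} {H : Set (Set I)} (h : Hier P S H) : S ∈ H := by
  cases h with
  | single i => exact rfl
  | join => exact Set.mem_insert _ _

lemma Hier.sub {S : Set I} {H : Set (Set I)} (h : Hier P S H) :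
    ∀ A ∈ H, A ⊆ S ∧ A.Nonempty := by
  induction h with
  | single i =>
    rintro A rfl
    exact ⟨subset_rfl, Set.singleton_nonempty i⟩
  | join h₁ h₂ hd hP ih₁ ih₂ =>
    rintro A (rfl | hA | hA)
    · exact ⟨subset_rfl, ((ih₁ _ h₁.top_mem).2).mono Set.subset_union_left⟩
    · exact ⟨(ih₁ A hA).1.trans Set.subset_union_left, (ih₁ A hA).2⟩
    · exact ⟨(ih₂ A hA).1.trans Set.subset_union_right, (ih₂ A hA).2⟩

lemma Hier.singleton_mem {S : Set I} {H : Set (Set I)} (h : Hier P S H) :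
    ∀ i ∈ S, {i} ∈ H := by
  induction h with
  | single i =>
    rintro j rfl
    exact rfl
  | join h₁ h₂ hd hP ih₁ ih₂ =>
    rintro i (hi | hi)
    · exact Or.inr (Or.inl (ih₁ i hi))
    · exact Or.inr (Or.inr (ih₂ i hi))

lemma Hier.laminar {S : Set I} {H : Set (Set I)} (h : Hier P S H) :
    ∀ A ∈ H, ∀ B ∈ H, A ⊆ B ∨ B ⊆ A ∨ Disjoint A B := by
  induction h with
  | single i =>
    rintro A rfl B rfl
    exact Or.inl subset_rfl
  | join h₁ h₂ hd hP ih₁ ih₂ =>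
    intro A hA B hB
    have hJ := (h₁.join h₂ hd hP).sub
    rcases hA with rfl | hA'
    · exact Or.inr (Or.inl (hJ B hB).1)
    · rcases hB with rfl | hB'
      · exact Or.inl (hJ A (Or.inr hA')).1
      · rcases hA' with hA | hA <;> rcases hB' with hB | hB
        · exact ih₁ A hA B hB
        · exact Or.inr (Or.inr (hd.mono (h₁.sub A hA).1 (h₂.sub B hB).1))
        · exact Or.inr (Or.inr (hd.symm.mono (h₂.sub A hA).1 (h₁.sub B hB).1))
        · exact ih₂ A hA B hB

lemma Hier.split {S : Set I} {H : Set (Set I)} (h : Hier P S H) :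
    ∀ A ∈ H, (∃ i, A = {i}) ∨ ∃ A₁ ∈ H, ∃ A₂ ∈ H, Disjoint A₁ A₂ ∧ A = A₁ ∪ A₂ ∧ P A₁ A₂ := by
  induction h with
  | single i =>
    rintro A rfl
    exact Or.inl ⟨i, rfl⟩
  | join h₁ h₂ hd hP ih₁ ih₂ =>
    rintro A (rfl | hA | hA)
    · exact Or.inr ⟨_, Or.inr (Or.inl h₁.top_mem), _, Or.inr (Or.inr h₂.top_mem), hd, rfl, hP⟩
    · rcases ih₁ A hA with h | ⟨A₁, hA₁, A₂, hA₂, h⟩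
      · exact Or.inl h
      · exact Or.inr ⟨A₁, Or.inr (Or.inl hA₁), A₂, Or.inr (Or.inl hA₂), h⟩
    · rcases ih₂ A hA with h | ⟨A₁, hA₁, A₂, hA₂, h⟩
      · exact Or.inl h
      · exact Or.inr ⟨A₁, Or.inr (Or.inr hA₁), A₂, Or.inr (Or.inr hA₂), h⟩

end HierLemmas

/-- From a hierarchy on all coordinates but one we get a cubic tree; apply the hypothesis. -/
lemma exists_split_of_hier {n : ℕ} {P : Set (Fin n) → Set (Fin n) → Prop} (i₀ : Fin n)
    {H : Set (Set (Fin n))} (h : Hier P {i | i ≠ i₀} H) (f : ℕ → ℕ) (b : ℕ)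
    (hyp : ∀ (V : Type) [Fintype V] (T : SimpleGraph V), T.IsTree → IsCubic T →
      (leaves T).ncard = n →
      ∃ v : V, deg T v = 3 ∧ ∑ u ∈ nbrFinset T v, f (nAway T v u) ≤ b)
    (hf : Monotone f) :
    ∃ A₁ A₂ : Set (Fin n), P A₁ A₂ ∧ Disjoint A₁ A₂ ∧
      f A₁.ncard + f A₂.ncard + f (A₁ ∪ A₂)ᶜ.ncard ≤ b := by
  classical
  let V : Type := {A : Set (Fin n) // A ∈ insert Set.univ H}
  haveI : Finite V := Subtype.finite
  letI : Fintype V := Fintype.ofFinite V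
  letI : OrderTop V := { top := ⟨Set.univ, Set.mem_insert _ _⟩, le_top := fun a => Set.subset_univ a.1 }
  have hi₀ : ∀ A ∈ H, i₀ ∉ A := fun A hA hi => ((h.sub A hA).1 hi) rfl
  have huniv : Set.univ ∉ H := fun hu => hi₀ _ hu (Set.mem_univ _)
  have hmem : ∀ a : V, a ≠ ⊤ → a.1 ∈ H := by
    intro a ha
    rcases a.2 with h' | h'
    · exact absurd (Subtype.ext h') ha
    · exact h'
  have hne : ∀ a : V, a.1.Nonempty := by
    intro a
    rcases a.2 with h' | h'
    · rw [h']; exact ⟨i₀, Set.mem_univ _⟩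
    · exact (h.sub _ h').2
  have hlam : ∀ a b : V, a ≤ b ∨ b ≤ a ∨ Disjoint a.1 b.1 := by
    intro a b
    by_cases ha : a = ⊤
    · right; left; rw [ha]; exact le_top
    by_cases hb : b = ⊤
    · left; rw [hb]; exact le_top
    exact h.laminar _ (hmem a ha) _ (hmem b hb)
  have hch : ∀ a b c : V, a ≤ b → a ≤ c → b ≤ c ∨ c ≤ b := by
    intro a b c hab hac
    rcases hlam b c with h' | h' | h'
    · exact Or.inl h'
    · exact Or.inr h'
    · obtain ⟨x, hx⟩ := hne a
      exact absurd (hac hx) (Set.disjoint_left.1 h' (hab hx))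
  have hsing : ∀ i, i ≠ i₀ → ({i} : Set (Fin n)) ∈ H := fun i hi => h.singleton_mem i hi
  let lf : Fin n → V := fun i => if hi : i = i₀ then ⊤ else ⟨{i}, Or.inr (hsing i hi)⟩
  have lf0 : lf i₀ = ⊤ := by simp [lf]
  have lf1 : ∀ i, i ≠ i₀ → (lf i).1 = {i} := by intro i hi; simp [lf, hi]
  have lfle : ∀ (a : V), a ≠ ⊤ → ∀ i, lf i ≤ a ↔ i ∈ a.1 := by
    intro a ha i
    by_cases hi : i = i₀
    · subst hi
      rw [lf0, top_le_iff]
      exact ⟨fun h' => absurd h' ha, fun h' => absurd h' (hi₀ _ (hmem a ha))⟩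
    · rw [← Subtype.coe_le_coe, lf1 i hi]
      exact Set.singleton_subset_iff
  have lfinj : Function.Injective lf := by
    intro i j hij
    by_cases hi : i = i₀ <;> by_cases hj : j = i₀
    · rw [hi, hj]
    · exfalso
      rw [hi, lf0] at hij
      apply huniv
      have := congrArg Subtype.val hij
      rw [lf1 j hj] at this
      have h2 := hsing j hj
      rw [← this] at h2
      exact h2
    · exfalso
      rw [hj, lf0] at hij
      apply huniv
      have := congrArg Subtype.val hij
      rw [lf1 i hi] at this
      have h2 := hsing i hi
      rw [this] at h2
      exact h2
    · have := congrArg Subtype.val hij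
      rw [lf1 i hi, lf1 j hj] at this
      exact Set.singleton_injective this
  let T : SimpleGraph V := SimpleGraph.hasse V
  have hT : T.IsTree := hasse_isTree hch
  have hparent : ∀ a : V, a ≠ ⊤ → ∃ b, a ⋖ b := by
    intro a ha
    obtain ⟨b, hb, -⟩ := exists_covBy_le_of_lt (lt_top_iff_ne_top.2 ha)
    exact ⟨b, hb⟩
  let S : V := ⟨_, Or.inr h.top_mem⟩
  have hSle : ∀ a : V, a ≠ ⊤ → a ≤ S := fun a ha => (h.sub _ (hmem a ha)).1
  have hStop : S ≠ ⊤ := by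
    intro h'
    apply huniv
    have := congrArg Subtype.val h'
    have h2 := h.top_mem
    have h3 : ({i | i ≠ i₀} : Set (Fin n)) = Set.univ := this
    rwa [h3] at h2
  have hScov : S ⋖ ⊤ := by
    refine ⟨lt_top_iff_ne_top.2 hStop, ?_⟩
    intro c hc hc'
    exact absurd (hSle c hc'.ne) (not_le_of_gt hc)
  have degtop : deg T ⊤ = 1 := by
    rw [deg, Set.ncard_eq_one]
    refine ⟨S, ?_⟩
    ext x
    rw [SimpleGraph.mem_neighborSet, Set.mem_singleton_iff]
    constructor
    · intro hx
      rcases SimpleGraph.hasse_adj.1 hx with hx | hx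
      · exact absurd hx.lt not_top_lt
      · rcases (hSle x hx.ne).eq_or_lt with h' | h'
        · exact h'
        · exact absurd hScov.lt (hx.2 h')
    · rintro rfl
      exact SimpleGraph.hasse_adj.2 (Or.inr hScov)
  have degleaf : ∀ i, deg T (lf i) = 1 := by
    intro i
    by_cases hi : i = i₀
    · rw [hi, lf0]; exact degtop
    · have hnt : lf i ≠ ⊤ := fun h' => hi (lfinj (h'.trans lf0.symm))
      obtain ⟨b, hb⟩ := hparent _ hnt
      rw [deg, Set.ncard_eq_one]
      refine ⟨b, ?_⟩
      ext x
      rw [SimpleGraph.mem_neighborSet, Set.mem_singleton_iff]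
      constructor
      · intro hx
        rcases SimpleGraph.hasse_adj.1 hx with hx | hx
        · exact covBy_unique hch hx hb
        · exfalso
          have hlt : x.1 ⊂ (lf i).1 := hx.lt
          rw [lf1 i hi, Set.ssubset_singleton_iff] at hlt
          exact (hne x).ne_empty hlt
      · rintro rfl
        exact SimpleGraph.hasse_adj.2 (Or.inl hb)
  have hint : ∀ a : V, (∃ i, a = lf i) ∨ ∃ a₁ a₂ b : V, a₁ ⋖ a ∧ a₂ ⋖ a ∧ a ⋖ b ∧
      Disjoint a₁.1 a₂.1 ∧ a.1 = a₁.1 ∪ a₂.1 ∧ P a₁.1 a₂.1 ∧ a₁ ≠ a₂ ∧ a₁ ≠ b ∧ a₂ ≠ b ∧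
      ∀ x, T.Adj a x ↔ x = a₁ ∨ x = a₂ ∨ x = b := by
    intro a
    by_cases ha : a = ⊤
    · exact Or.inl ⟨i₀, ha.trans lf0.symm⟩
    rcases h.split _ (hmem a ha) with ⟨i, hi⟩ | ⟨A₁, hA₁, A₂, hA₂, hd, hA, hP⟩
    · left
      have hii : i ≠ i₀ := by
        rintro rfl
        exact hi₀ _ (hmem a ha) (by rw [hi]; rfl)
      exact ⟨i, Subtype.ext (hi.trans (lf1 i hii).symm)⟩
    · right
      have child : ∀ A B : V, Disjoint A.1 B.1 → a.1 = A.1 ∪ B.1 → A ⋖ a := by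
        intro A B hAB haAB
        obtain ⟨y, hy⟩ := hne B
        obtain ⟨z, hz⟩ := hne A
        have hle : A ≤ a := by
          rw [← Subtype.coe_le_coe, haAB]; exact Set.subset_union_left
        refine ⟨lt_of_le_of_ne hle ?_, ?_⟩
        · intro he
          have : y ∈ A.1 := by rw [he, haAB]; exact Or.inr hy
          exact Set.disjoint_left.1 hAB this hy
        · intro c hc hca
          have hzc : z ∈ c.1 := hc.le hz
          rcases hlam c B with h' | h' | h'
          · exact Set.disjoint_left.1 hAB hz (h' hzc)
          · refine absurd ?_ (not_le_of_gt hca)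
            rw [← Subtype.coe_le_coe, haAB]
            exact Set.union_subset hc.le h'
          · refine absurd ?_ (not_le_of_gt hc)
            intro w hw
            have : w ∈ a.1 := hca.le hw
            rw [haAB] at this
            exact this.resolve_right (Set.disjoint_left.1 h' hw)
      obtain ⟨b, hb⟩ := hparent a ha
      let a₁ : V := ⟨A₁, Or.inr hA₁⟩
      let a₂ : V := ⟨A₂, Or.inr hA₂⟩
      have h1 : a₁ ⋖ a := child a₁ a₂ hd hA
      have h2 : a₂ ⋖ a := child a₂ a₁ hd.symm (by rw [hA]; exact Set.union_comm _ _)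
      refine ⟨a₁, a₂, b, h1, h2, hb, hd, hA, hP, ?_, (h1.lt.trans hb.lt).ne,
        (h2.lt.trans hb.lt).ne, ?_⟩
      · intro he
        obtain ⟨y, hy⟩ := hne a₁
        exact Set.disjoint_left.1 hd hy (by have := he ▸ hy; exact this)
      · intro x
        constructor
        · intro hx
          rcases SimpleGraph.hasse_adj.1 hx with hx | hx
          · exact Or.inr (Or.inr (covBy_unique hch hx hb))
          · obtain ⟨y, hy⟩ := hne x
            have hya : y ∈ a.1 := hx.le hy
            rw [hA] at hya
            have aux : ∀ A : V, A ⋖ a → y ∈ A.1 → x = A := by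
              intro A hAa hyA
              rcases hlam x A with h' | h' | h'
              · rcases h'.eq_or_lt with h' | h'
                · exact h'
                · exact absurd hAa.lt (hx.2 h')
              · rcases h'.eq_or_lt with h' | h'
                · exact h'.symm
                · exact absurd hx.lt (hAa.2 h')
              · exact absurd hyA (Set.disjoint_left.1 h' hy)
            rcases hya with hya | hya
            · exact Or.inl (aux a₁ h1 hya)
            · exact Or.inr (Or.inl (aux a₂ h2 hya))
        · rintro (rfl | rfl | rfl)
          · exact SimpleGraph.hasse_adj.2 (Or.inr h1)
          · exact SimpleGraph.hasse_adj.2 (Or.inr h2)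
          · exact SimpleGraph.hasse_adj.2 (Or.inl hb)
  have hdeg3 : ∀ a : V, (∃ i, a = lf i) ∨ deg T a = 3 := by
    intro a
    rcases hint a with h' | ⟨a₁, a₂, b, _, _, _, _, _, _, h12, h1b, h2b, hN⟩
    · exact Or.inl h'
    · right
      have : T.neighborSet a = {a₁, a₂, b} := by
        ext x
        rw [SimpleGraph.mem_neighborSet, hN]
        rfl
      rw [deg, this, Set.ncard_eq_three]
      exact ⟨a₁, a₂, b, h12, h1b, h2b, rfl⟩
  have hleaves : leaves T = Set.range lf := by
    ext a
    constructor
    · intro ha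
      have ha' : deg T a = 1 := ha
      rcases hdeg3 a with ⟨i, hi⟩ | h'
      · exact ⟨i, hi.symm⟩
      · omega
    · rintro ⟨i, rfl⟩
      exact degleaf i
  have hcubic : IsCubic T := by
    intro a
    rcases hdeg3 a with ⟨i, rfl⟩ | h'
    · exact Or.inl (degleaf i)
    · exact Or.inr h'
  have hcard : (leaves T).ncard = n := by
    rw [hleaves, ← Set.image_univ, Set.ncard_image_of_injective _ lfinj, Set.ncard_univ,
      Nat.card_eq_fintype_card, Fintype.card_fin]
  have hcount : ∀ (v u : V) (A : Set (Fin n)), (∀ i ∈ A, lf i ∈ compAway T v u) →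
      A.ncard ≤ nAway T v u := by
    intro v u A hA
    rw [nAway, ← Set.ncard_image_of_injective A lfinj]
    refine Set.ncard_le_ncard ?_ (Set.toFinite _)
    rintro _ ⟨i, hi, rfl⟩
    exact ⟨hA i hi, by rw [hleaves]; exact ⟨i, rfl⟩⟩
  obtain ⟨v, hv3, hv⟩ := hyp V T hT hcubic hcard
  rcases hint v with ⟨i, rfl⟩ | ⟨a₁, a₂, b, h1, h2, hb, hd, hA, hP, h12, h1b, h2b, hN⟩
  · have := degleaf i
    omega
  · refine ⟨a₁.1, a₂.1, hP, hd, le_trans ?_ hv⟩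
    have hset : nbrFinset T v = {a₁, a₂, b} := by
      ext x
      simp only [nbrFinset, Set.Finite.mem_toFinset, SimpleGraph.mem_neighborSet, hN,
        Finset.mem_insert, Finset.mem_singleton]
    have hvt : v ≠ ⊤ := fun h' => by rw [h'] at hb; exact not_top_lt hb.lt
    have h1t : a₁ ≠ ⊤ := fun h' => by rw [h'] at h1; exact not_top_lt h1.lt
    have h2t : a₂ ≠ ⊤ := fun h' => by rw [h'] at h2; exact not_top_lt h2.lt
    rw [hset, Finset.sum_insert (by simp [h12, h1b]), Finset.sum_insert (by simp [h2b]),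
      Finset.sum_singleton, ← add_assoc]
    refine Nat.add_le_add (Nat.add_le_add (hf (hcount _ _ _ ?_)) (hf (hcount _ _ _ ?_)))
      (hf (hcount _ _ _ ?_))
    · intro i hi
      rw [hasse_compAway_down hch h1]
      exact (lfle a₁ h1t i).2 hi
    · intro i hi
      rw [hasse_compAway_down hch h2]
      exact (lfle a₂ h2t i).2 hi
    · intro i hi
      rw [hasse_compAway_up hch hb]
      rw [← hA] at hi
      exact fun hle => hi ((lfle v hvt i).1 hle)

/-! ### From a tree decomposition to a hierarchy -/

/-- Split condition witnessed by a node of the decomposition tree. -/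
def NodeSplit {n : ℕ} {V : Type} (T : SimpleGraph V) (ω : Fin n → V)
    (S₁ S₂ : Set (Fin n)) : Prop :=
  ∃ v, ∀ u, T.Adj v u → ω ⁻¹' compAway T v u ⊆ S₁ ∨ ω ⁻¹' compAway T v u ⊆ S₂ ∨
    ω ⁻¹' compAway T v u ⊆ (S₁ ∪ S₂)ᶜ

/-- Empty, or top of a hierarchy. -/
def GoodE {n : ℕ} {V : Type} (T : SimpleGraph V) (ω : Fin n → V) (S : Set (Fin n)) : Prop :=
  S = ∅ ∨ ∃ H, Hier (NodeSplit T ω) S H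

/-- Good and saturated with respect to the branches at `v`. -/
def GoodAt {n : ℕ} {V : Type} (T : SimpleGraph V) (ω : Fin n → V) (v : V)
    (S : Set (Fin n)) : Prop :=
  GoodE T ω S ∧ ∀ u, T.Adj v u → ω ⁻¹' compAway T v u ⊆ S ∨ Disjoint (ω ⁻¹' compAway T v u) S

section Decomp

variable {n : ℕ} {V : Type} {T : SimpleGraph V} {ω : Fin n → V}

lemma GoodAt.union {v : V} {S₁ S₂ : Set (Fin n)} (h₁ : GoodAt T ω v S₁) (h₂ : GoodAt T ω v S₂)
    (hd : Disjoint S₁ S₂) : GoodAt T ω v (S₁ ∪ S₂) := by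
  obtain ⟨g₁, s₁⟩ := h₁
  obtain ⟨g₂, s₂⟩ := h₂
  refine ⟨?_, ?_⟩
  · rcases g₁ with rfl | ⟨H₁, g₁⟩
    · rwa [Set.empty_union]
    rcases g₂ with rfl | ⟨H₂, g₂⟩
    · rw [Set.union_empty]; exact Or.inr ⟨H₁, g₁⟩
    refine Or.inr ⟨_, g₁.join g₂ hd ⟨v, ?_⟩⟩
    intro u hu
    rcases s₁ u hu with h | h
    · exact Or.inl h
    rcases s₂ u hu with h' | h'
    · exact Or.inr (Or.inl h')
    · refine Or.inr (Or.inr ?_)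
      rw [Set.subset_compl_iff_disjoint_right]
      exact Set.disjoint_union_right.2 ⟨h, h'⟩
  · intro u hu
    rcases s₁ u hu with h | h
    · exact Or.inl (h.trans Set.subset_union_left)
    rcases s₂ u hu with h' | h'
    · exact Or.inl (h'.trans Set.subset_union_right)
    · exact Or.inr (Set.disjoint_union_right.2 ⟨h, h'⟩)

lemma GoodAt.biUnion {ι : Type} {v : V} (s : Finset ι) (B : ι → Set (Fin n))
    (hB : ∀ i ∈ s, GoodAt T ω v (B i))
    (hd : ∀ i ∈ s, ∀ j ∈ s, i ≠ j → Disjoint (B i) (B j)) : GoodAt T ω v (⋃ i ∈ s, B i) := by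
  classical
  induction s using Finset.induction_on with
  | empty => exact ⟨Or.inl (by simp), fun u _ => Or.inr (by simp)⟩
  | insert a s ha ih =>
    rw [Finset.set_biUnion_insert]
    refine (hB a (Finset.mem_insert_self _ _)).union (ih ?_ ?_) ?_
    · exact fun i hi => hB i (Finset.mem_insert_of_mem hi)
    · exact fun i hi j hj => hd i (Finset.mem_insert_of_mem hi) j (Finset.mem_insert_of_mem hj)
    · simp only [Set.disjoint_iUnion_right]
      intro i hi
      exact hd a (Finset.mem_insert_self _ _) i (Finset.mem_insert_of_mem hi)
        (fun h => ha (h ▸ hi))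

lemma branch_disjoint (hT : T.IsTree) {v u₁ u₂ : V} (h₁ : T.Adj v u₁) (h₂ : T.Adj v u₂)
    (hne : u₁ ≠ u₂) : Disjoint (ω ⁻¹' compAway T v u₁) (ω ⁻¹' compAway T v u₂) := by
  rw [Set.disjoint_left]
  intro i hi hi'
  exact compAway_disj hT h₁ h₂ hne hi hi'

lemma goodAt_node [Fintype V] (hT : T.IsTree) (v : V) (W : Set V) (J : Set (Fin n))
    (hW : ∀ u ∈ W, T.Adj v u ∧ GoodE T ω (ω ⁻¹' compAway T v u)) (hJ : ∀ i ∈ J, ω i = v) :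
    GoodE T ω ((⋃ u ∈ W, ω ⁻¹' compAway T v u) ∪ J) := by
  classical
  have h1 : GoodAt T ω v (⋃ u ∈ W.toFinset, ω ⁻¹' compAway T v u) := by
    refine GoodAt.biUnion _ _ ?_ ?_
    · intro u hu
      rw [Set.mem_toFinset] at hu
      refine ⟨(hW u hu).2, ?_⟩
      intro u' hu'
      by_cases he : u' = u
      · subst he; exact Or.inl subset_rfl
      · exact Or.inr (branch_disjoint hT hu' (hW u hu).1 he)
    · intro u hu u' hu' he
      rw [Set.mem_toFinset] at hu hu'
      exact branch_disjoint hT (hW u hu).1 (hW u' hu').1 he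
  have h2 : GoodAt T ω v (⋃ i ∈ J.toFinset, {i}) := by
    refine GoodAt.biUnion _ _ ?_ ?_
    · intro i hi
      rw [Set.mem_toFinset] at hi
      refine ⟨Or.inr ⟨_, Hier.single i⟩, ?_⟩
      intro u hu
      right
      rw [Set.disjoint_singleton_right]
      intro hiu
      rw [Set.mem_preimage, hJ i hi] at hiu
      exact notMem_compAway hT hu hiu
    · intro i _ j _ he
      simpa using he
  have e1 : (⋃ u ∈ W.toFinset, ω ⁻¹' compAway T v u) = ⋃ u ∈ W, ω ⁻¹' compAway T v u := by
    simp
  have e2 : (⋃ i ∈ J.toFinset, {i}) = J := by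
    simp
  rw [e1] at h1
  rw [e2] at h2
  refine (h1.union h2 ?_).1
  rw [Set.disjoint_left]
  intro i hi hiJ
  simp only [Set.mem_iUnion] at hi
  obtain ⟨u, hu, hi⟩ := hi
  rw [Set.mem_preimage, hJ i hiJ] at hi
  exact notMem_compAway hT (hW u hu).1 hi

lemma goodE_branch [Fintype V] (hT : T.IsTree) : ∀ (m : ℕ) (v u : V), T.Adj v u →
    (compAway T v u).ncard = m → GoodE T ω (ω ⁻¹' compAway T v u) := by
  intro m
  induction m using Nat.strong_induction_on with
  | _ m ih =>
    intro v u hvu hm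
    have hsub : ∀ u', T.Adj u u' → u' ≠ v → compAway T u u' ⊆ compAway T v u := by
      intro u' hu' hne w hw
      rw [compAway_compl hT hvu.symm]
      exact fun hw' => compAway_disj hT hu' hvu.symm hne hw hw'
    have key := goodAt_node (ω := ω) hT u {u' | T.Adj u u' ∧ u' ≠ v} {i | ω i = u} ?_ ?_
    · convert key using 1
      ext i
      constructor
      · intro hi
        rcases exists_compAway hT.connected u (ω i) with h | ⟨u', hu', h⟩
        · exact Or.inr h
        · left
          simp only [Set.mem_iUnion]
          refine ⟨u', ⟨hu', ?_⟩, h⟩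
          rintro rfl
          exact compAway_disj_symm hT hvu hi h
      · rintro (hi | hi)
        · simp only [Set.mem_iUnion] at hi
          obtain ⟨u', ⟨hu', hne⟩, h⟩ := hi
          exact hsub u' hu' hne h
        · have hi' : ω i = u := hi
          rw [Set.mem_preimage, hi']
          exact self_mem_compAway _ _ _
    · rintro u' ⟨hu', hne⟩
      refine ⟨hu', ih _ ?_ u u' hu' rfl⟩
      rw [← hm]
      refine Set.ncard_lt_ncard ⟨hsub u' hu' hne, ?_⟩ (Set.toFinite _)
      intro hle
      exact notMem_compAway hT hu' (hle (self_mem_compAway _ _ _))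
    · exact fun i hi => hi

lemma goodE_root [Fintype V] (hT : T.IsTree) (i₀ : Fin n) : GoodE T ω {i | i ≠ i₀} := by
  have key := goodAt_node (ω := ω) hT (ω i₀) {u | T.Adj (ω i₀) u} {i | ω i = ω i₀ ∧ i ≠ i₀}
    (fun u hu => ⟨hu, goodE_branch hT _ _ _ hu rfl⟩) (fun i hi => hi.1)
  convert key using 1
  ext i
  constructor
  · intro hi
    rcases exists_compAway hT.connected (ω i₀) (ω i) with h | ⟨u, hu, h⟩
    · exact Or.inr ⟨h, hi⟩
    · left
      simp only [Set.mem_iUnion]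
      exact ⟨u, hu, h⟩
  · rintro (hi | hi)
    · simp only [Set.mem_iUnion] at hi
      obtain ⟨u, hu, h⟩ := hi
      rintro rfl
      exact notMem_compAway hT hu h
    · exact hi.2

end Decomp

section Main

variable {F : Type} [Field F] {n : ℕ} (C : Submodule F (Fin n → F))

lemma Ucap_mono : Monotone (Ucap C) := by
  intro s t hst
  unfold Ucap
  refine csSup_le ⟨0, ⊥, bot_le, ?_, finrank_bot _ _⟩ ?_
  · have : chi (⊥ : Submodule F (Fin n → F)) = ∅ := by
      ext i
      simp [chi]
    simp [this]
  · rintro d ⟨D, hD, hs, rfl⟩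
    refine le_csSup ⟨finrank F C, ?_⟩ ⟨D, hD, hs.trans hst, rfl⟩
    rintro d ⟨D, hD, _, rfl⟩
    exact Submodule.finrank_mono hD

lemma mem_nbrFinset {V : Type} [Fintype V] {T : SimpleGraph V} {v u : V} :
    u ∈ nbrFinset T v ↔ T.Adj v u := by
  simp [nbrFinset]

lemma lower_bound {k : ℕ} (hk : finrank F ↥C = k)
    (hyp : ∀ (V : Type) [Fintype V] (T : SimpleGraph V), T.IsTree → IsCubic T →
      (leaves T).ncard = n →
      ∃ v : V, deg T v = 3 ∧
        ∑ u ∈ nbrFinset T v, Ucap C (nAway T v u) ≤ k - trellisWidth C)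
    {V : Type} [Fintype V] (T : SimpleGraph V) (ω : Fin n → V) (hT : T.IsTree) :
    trellisWidth C ≤ constraintComplexity C T ω := by
  have hτ := trellisWidth_le C
  rcases Nat.eq_zero_or_pos n with rfl | hn
  · have : finrank F C = 0 := by
      have := Submodule.finrank_le C
      simpa using this
    omega
  let i₀ : Fin n := ⟨0, hn⟩
  suffices h : ∃ v, ∑ u ∈ nbrFinset T v, shortDim C (ω ⁻¹' compAway T v u) ≤
      k - trellisWidth C by
    obtain ⟨v, hv⟩ := h
    refine le_trans ?_ (Finset.le_sup (f := kappaNode C T ω) (Finset.mem_univ v))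
    unfold kappaNode
    omega
  rcases goodE_root (ω := ω) hT i₀ with h | ⟨H, h⟩
  · refine ⟨ω i₀, ?_⟩
    rw [Finset.sum_eq_zero]
    · exact Nat.zero_le _
    intro u hu
    rw [mem_nbrFinset] at hu
    have : ω ⁻¹' compAway T (ω i₀) u = ∅ := by
      rw [Set.eq_empty_iff_forall_notMem]
      intro i hi
      by_cases hi0 : i = i₀
      · subst hi0
        exact notMem_compAway hT hu hi
      · have : i ∈ ({i | i ≠ i₀} : Set (Fin n)) := hi0
        rw [h] at this
        exact this
    rw [this, shortDim_empty]
  · obtain ⟨A₁, A₂, ⟨v, hv⟩, hd, hle⟩ := exists_split_of_hier i₀ h (Ucap C) _ hyp (Ucap_mono C)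
    refine ⟨v, le_trans ?_ hle⟩
    refine le_trans (sum_shortDim_le_three C (nbrFinset T v) _ A₁ A₂ (A₁ ∪ A₂)ᶜ ?_ ?_) ?_
    · intro u hu u' hu' hne
      rw [mem_nbrFinset] at hu hu'
      exact branch_disjoint hT hu hu' hne
    · intro u hu
      exact hv u (mem_nbrFinset.1 hu)
    · exact Nat.add_le_add (Nat.add_le_add (shortDim_le_Ucap C le_rfl)
        (shortDim_le_Ucap C le_rfl)) (shortDim_le_Ucap C le_rfl)

lemma path_bound {m : ℕ} (C : Submodule F (Fin (m + 1) → F)) (π : Equiv.Perm (Fin (m + 1))) :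
    constraintComplexity C (SimpleGraph.hasse (Fin (m + 1))) ⇑π.symm ≤
      Finset.univ.sup fun i : Fin (m + 1) =>
        finrank F ↥C - shortDim C (⇑π '' {j | j < i}) - shortDim C (⇑π '' {j | i < j}) := by
  classical
  have hch : ∀ a b c : Fin (m + 1), a ≤ b → a ≤ c → b ≤ c ∨ c ≤ b := fun _ b c _ _ => le_total b c
  refine Finset.sup_mono_fun ?_
  intro i _
  unfold kappaNode
  suffices h : shortDim C (⇑π '' {j | j < i}) + shortDim C (⇑π '' {j | i < j}) ≤
      ∑ u ∈ nbrFinset (SimpleGraph.hasse (Fin (m + 1))) i,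
        shortDim C (⇑π.symm ⁻¹' compAway (SimpleGraph.hasse (Fin (m + 1))) i u) by omega
  rw [Equiv.image_eq_preimage_symm, Equiv.image_eq_preimage_symm]
  set N := nbrFinset (SimpleGraph.hasse (Fin (m + 1))) i
  set g : Fin (m + 1) → ℕ := fun u =>
    shortDim C (⇑π.symm ⁻¹' compAway (SimpleGraph.hasse (Fin (m + 1))) i u)
  have hsplit : ∑ u ∈ N, g u = ∑ u ∈ N with u < i, g u + ∑ u ∈ N with ¬ u < i, g u :=
    (Finset.sum_filter_add_sum_filter_not N _ g).symm
  rw [hsplit]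
  refine Nat.add_le_add ?_ ?_
  · by_cases h0 : i = ⊥
    · have : ({j | j < i} : Set (Fin (m + 1))) = ∅ := by
        ext j; simp [h0]
      rw [this, Set.preimage_empty, shortDim_empty]
      exact Nat.zero_le _
    · obtain ⟨p, -, hp⟩ := exists_le_covBy_of_lt (bot_lt_iff_ne_bot.2 h0)
      have hpN : p ∈ N.filter (· < i) :=
        Finset.mem_filter.2 ⟨mem_nbrFinset.2 (SimpleGraph.hasse_adj.2 (Or.inr hp)), hp.lt⟩
      refine le_trans ?_ (Finset.single_le_sum (f := g) (fun _ _ => Nat.zero_le _) hpN)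
      refine shortDim_mono C (Set.preimage_mono ?_)
      rw [hasse_compAway_down hch hp]
      intro j hj
      exact hp.le_of_lt hj
  · by_cases h0 : i = ⊤
    · have : ({j | i < j} : Set (Fin (m + 1))) = ∅ := by
        ext j; simp [h0]
      rw [this, Set.preimage_empty, shortDim_empty]
      exact Nat.zero_le _
    · obtain ⟨p, hp, -⟩ := exists_covBy_le_of_lt (lt_top_iff_ne_top.2 h0)
      have hpN : p ∈ N.filter (fun u => ¬ u < i) :=
        Finset.mem_filter.2 ⟨mem_nbrFinset.2 (SimpleGraph.hasse_adj.2 (Or.inl hp)),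
          not_lt_of_gt hp.lt⟩
      refine le_trans ?_ (Finset.single_le_sum (f := g) (fun _ _ => Nat.zero_le _) hpN)
      refine shortDim_mono C (Set.preimage_mono ?_)
      rw [hasse_compAway_up hch hp]
      intro j hj
      have hj2 : i < j := hj
      exact not_le_of_gt hj2

lemma treeWidth_le_trellisWidth : treeWidth C ≤ trellisWidth C := by
  rcases n with _ | m
  · refine le_trans (Nat.sInf_le ⟨1, SimpleGraph.hasse (Fin 1), Fin.elim0,
      hasse_isTree (fun _ b c _ _ => le_total b c), rfl⟩) ?_
    refine le_trans (Finset.sup_le (a := 0) ?_) (Nat.zero_le _)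
    intro v _
    have : finrank F C = 0 := by
      have := Submodule.finrank_le C
      simpa using this
    unfold kappaNode
    omega
  · obtain ⟨π, hπ⟩ := Nat.sInf_mem (s := {t : ℕ | ∃ π : Equiv.Perm (Fin (m + 1)),
      t = Finset.univ.sup fun i : Fin (m + 1) =>
        finrank F ↥C - shortDim C (⇑π '' {j | j < i}) - shortDim C (⇑π '' {j | i < j})})
      ⟨_, 1, rfl⟩
    unfold trellisWidth
    rw [hπ]
    exact le_trans (Nat.sInf_le ⟨m + 1, SimpleGraph.hasse (Fin (m + 1)), ⇑π.symm,
      hasse_isTree (fun _ b c _ _ => le_total b c), rfl⟩) (path_bound C π)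

end Main

/-- Proposition 1: if for every cubic tree `T` with `n` leaves there is
an internal node `v` with `U_{n_1} + U_{n_2} + U_{n_3} ≤ k − τ(C)`, then the treewidth of
`C` equals its trelliswidth. -/
theorem stmt0 {F : Type} [Field F] [Fintype F] {n k : ℕ}
    (C : Submodule F (Fin n → F)) (hk : finrank F ↥C = k)
    (hyp : ∀ (V : Type) [Fintype V] (T : SimpleGraph V), T.IsTree → IsCubic T →
      (leaves T).ncard = n →
      ∃ v : V, deg T v = 3 ∧
        ∑ u ∈ nbrFinset T v, Ucap C (nAway T v u) ≤ k - trellisWidth C) :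
    treeWidth C = trellisWidth C := by
  refine le_antisymm (treeWidth_le_trellisWidth C) ?_
  unfold treeWidth
  refine le_csInf ⟨_, 1, SimpleGraph.hasse (Fin 1), fun _ => 0,
    hasse_isTree (fun _ b c _ _ => le_total b c), rfl⟩ ?_
  rintro t ⟨N, T, ω, hT, rfl⟩
  exact lower_bound C hk hyp T ω hT
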